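/- (Proposition 1, determination of the Hilbert function by the generalized Poincaré series.) Let (V; ν₁,…,ν_r) and (V′; ν′₁,…,ν′_r) be two ℂ-vector spaces each equipped with r order functions with values in ℕ. Assume for both collections: all codimensions h(v) = dim V/J(v) (resp. h′(v) = dim V′/J′(v)) are finite, and for every v ∈ ℕ^r there exists g in the respective space with all ν_i(g) (resp. ν′_i(g)) finite and ν_i(g) ≥ v_i for all i. If the generalized Poincaré coefficients agree, i.e. c_v(q) = c′_v(q) in ℤ[q,q^{−1}] for every v ∈ ℕ^r, then the Hilbert functions agree: h(v) = h′(v) for every v ∈ ℕ^r. -/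

import Mathlib

/-!
Write `h(v) = dim V/J(v)` and let `1_I` be the indicator vector of `I`. Since
`J^{+I}(v) = J(v + 1_I)`, additivity of dimension gives `h⁺(v) - d_I(v) = h(v + 1_I)`, so
summing the geometric progressions yields, when there is at least one order function,
`(1 - q) c_v(q) = ∑_I (-1)^{#I} q^{h(v + 1_I)}` (`sub_one_mul_genPoincareCoeff`).

Hence for two collections with the same coefficients, `F(v) = q^{h(v)} - q^{h'(v)}` is
annihilated by the mixed difference operator `∏_i (1 - S_i)`, where `S_i` is the shift by `e_i`.
Existence of elements with large finite values makes `h` and `h'` tend to infinity along each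
coordinate (`hilbertFn_eventually`), so each fixed coefficient of `F` vanishes far out along each
coordinate. A function killed by `1 - S_i` is constant in the direction `e_i`, so the factors
can be removed one at a time (`eq_zero_of_mixedDiff_eq_zero`), and `F = 0`.
-/

open Polynomial LaurentPolynomial

variable {ι V : Type*} [Fintype ι] [DecidableEq ι] [AddCommGroup V] [Module ℂ V]

/-- `d_I(v) = dim_ℂ J^{+I}(v) / J^{+}(v)`, where the subspaces `J^{+I}(v)` are given
by the family `Jp`. -/
noncomputable def dimPlus (Jp : Finset ι → (ι → ℕ) → Submodule ℂ V)
    (I : Finset ι) (v : ι → ℕ) : ℕ :=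
  Module.finrank ℂ
    (↥(Jp I v) ⧸ (Submodule.comap (Jp I v).subtype (Jp Finset.univ v)))

/-- The polynomial `p_v(x) = Σ_{I} (−1)^{#I}(1 + x + ⋯ + x^{d_I(v)−1})`, the class of
the projectivized fibre of the extended semigroup. -/
noncomputable def fibreClassPoly (Jp : Finset ι → (ι → ℕ) → Submodule ℂ V)
    (v : ι → ℕ) : Polynomial ℤ :=
  ∑ I : Finset ι, (-1 : Polynomial ℤ) ^ I.card *
    ∑ k ∈ Finset.range (dimPlus Jp I v), X ^ k

/-- The Hilbert function `h(v) = dim_ℂ V/J(v)`. -/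
noncomputable def hilbertFn (Jp : Finset ι → (ι → ℕ) → Submodule ℂ V)
    (v : ι → ℕ) : ℕ :=
  Module.finrank ℂ (V ⧸ Jp (∅ : Finset ι) v)

/-- `h⁺(v) = dim_ℂ V/J⁺(v)`. -/
noncomputable def hilbertFnPlus (Jp : Finset ι → (ι → ℕ) → Submodule ℂ V)
    (v : ι → ℕ) : ℕ :=
  Module.finrank ℂ (V ⧸ Jp (Finset.univ : Finset ι) v)

/-- The coefficient `c_v(q) = q^{h⁺(v)−1} p_v(q^{−1})` of `t^v` in the generalized
Poincaré series, as a Laurent polynomial in `q`. -/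
noncomputable def genPoincareCoeff (Jp : Finset ι → (ι → ℕ) → Submodule ℂ V)
    (v : ι → ℕ) : LaurentPolynomial ℤ :=
  T ((hilbertFnPlus Jp v : ℤ) - 1) *
    Polynomial.eval₂ LaurentPolynomial.C (T (-1)) (fibreClassPoly Jp v)

/-- The defining property of the family `Jp` of subspaces:
`Jp I v = J^{+I}(v) = {g : ν_i(g) ≥ v_i ∀ i, and ν_i(g) > v_i ∀ i ∈ I}`. -/
def IsPlusFiltration (ν : ι → V → ℕ∞)
    (Jp : Finset ι → (ι → ℕ) → Submodule ℂ V) : Prop :=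
  ∀ (I : Finset ι) (v : ι → ℕ),
    (Jp I v : Set V) =
      {g : V | (∀ i, (v i : ℕ∞) ≤ ν i g) ∧ ∀ i ∈ I, (v i : ℕ∞) < ν i g}

set_option linter.unusedSectionVars false

/-- The indicator vector `1_I` of a set of indices. -/
def indVec (I : Finset ι) : ι → ℕ := fun i => if i ∈ I then 1 else 0

/-- A function on `ℕ^ι` that is killed by the mixed difference `∏_{i ∈ s} (1 - S_i)`
and is eventually zero along every coordinate direction vanishes identically. -/
lemma eq_zero_of_mixedDiff_eq_zero (s : Finset ι) (F : (ι → ℕ) → ℤ)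
    (hF : ∀ v i, ∃ N : ℕ, ∀ n, N ≤ n → F (v + n • indVec {i}) = 0)
    (hD : ∀ v, ∑ I ∈ s.powerset, (-1 : ℤ) ^ I.card * F (v + indVec I) = 0) :
    ∀ v, F v = 0 := by
  induction s using Finset.induction_on with
  | empty =>
    intro v
    have h := hD v
    have h0 : v + indVec (∅ : Finset ι) = v := by ext j; simp [indVec]
    simpa [h0] using h
  | insert i s hi ih =>
    apply ih
    intro v
    set G : (ι → ℕ) → ℤ := fun v =>
      ∑ I ∈ s.powerset, (-1 : ℤ) ^ I.card * F (v + indVec I) with hG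
    have hstep : ∀ v, G v = G (v + indVec {i}) := by
      intro v
      have h := hD v
      rw [Finset.sum_powerset_insert hi] at h
      have h2 : ∑ I ∈ s.powerset, (-1 : ℤ) ^ (insert i I).card * F (v + indVec (insert i I))
          = - G (v + indVec {i}) := by
        rw [hG, ← Finset.sum_neg_distrib]
        refine Finset.sum_congr rfl fun I hI => ?_
        have hiI : i ∉ I := fun h => hi (Finset.mem_powerset.1 hI h)
        have hv : v + indVec (insert i I) = v + indVec {i} + indVec I := by
          ext j
          by_cases hj : j = i
          · subst hj; simp [indVec, hiI]
          · simp [indVec, hj]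
        rw [Finset.card_insert_of_notMem hiI, hv, pow_succ]
        ring
      rw [h2] at h
      linarith
    have hiter : ∀ (n : ℕ) v, G v = G (v + n • indVec {i}) := by
      intro n
      induction n with
      | zero => intro v; simp
      | succ n ihn =>
        intro v
        rw [ihn v, hstep, add_smul, one_smul, add_assoc]
    choose N hN using fun I : Finset ι => hF (v + indVec I) i
    change G v = 0
    rw [hiter (s.powerset.sup N) v]
    refine Finset.sum_eq_zero fun I hI => ?_
    rw [add_right_comm, hN I _ (Finset.le_sup hI), mul_zero]

/-- Additivity of codimension: `dim V/N = dim M/N + dim V/M` for `N ≤ M`. -/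
lemma finrank_quotient_tower (N M : Submodule ℂ V) (hNM : N ≤ M)
    [FiniteDimensional ℂ (V ⧸ N)] :
    Module.finrank ℂ (V ⧸ N) =
      Module.finrank ℂ (M ⧸ Submodule.comap M.subtype N) + Module.finrank ℂ (V ⧸ M) := by
  have h1 := Submodule.finrank_quotient_add_finrank (M.map N.mkQ)
  have h2 := (Submodule.quotientQuotientEquivQuotient N M hNM).finrank_eq
  have hk : LinearMap.ker (N.mkQ ∘ₗ M.subtype) = Submodule.comap M.subtype N := by
    rw [LinearMap.ker_comp, Submodule.ker_mkQ]
  have hr : LinearMap.range (N.mkQ ∘ₗ M.subtype) = M.map N.mkQ := by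
    rw [LinearMap.range_comp, Submodule.range_subtype]
  have h3 := (LinearMap.quotKerEquivRange (N.mkQ ∘ₗ M.subtype)).finrank_eq
  rw [hr, hk] at h3
  omega

lemma finrank_quotient_lt (N M : Submodule ℂ V) (hNM : N ≤ M)
    [FiniteDimensional ℂ (V ⧸ N)] {g : V} (hg : g ∈ M) (hgN : g ∉ N) :
    Module.finrank ℂ (V ⧸ M) < Module.finrank ℂ (V ⧸ N) := by
  rw [finrank_quotient_tower N M hNM, Nat.lt_add_left_iff_pos]
  have : FiniteDimensional ℂ (M ⧸ Submodule.comap M.subtype N) := by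
    refine Module.Finite.of_injective
      (Submodule.mapQ (Submodule.comap M.subtype N) N M.subtype le_rfl) ?_
    rw [← LinearMap.ker_eq_bot, Submodule.ker_mapQ, Submodule.mkQ_map_self]
  have : Nontrivial (M ⧸ Submodule.comap M.subtype N) := by
    rw [Submodule.Quotient.nontrivial_iff]
    intro h
    have : (⟨g, hg⟩ : M) ∈ Submodule.comap M.subtype N := h ▸ Submodule.mem_top
    exact hgN this
  exact Module.finrank_pos

section Filtration

variable {ν : ι → V → ℕ∞} {Jp : Finset ι → (ι → ℕ) → Submodule ℂ V}

lemma mem_plus_iff (hJp : IsPlusFiltration ν Jp) (I : Finset ι) (v : ι → ℕ) (g : V) :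
    g ∈ Jp I v ↔ (∀ i, (v i : ℕ∞) ≤ ν i g) ∧ ∀ i ∈ I, (v i : ℕ∞) < ν i g := by
  rw [← SetLike.mem_coe, hJp I v]; rfl

/-- `J^{+I}(v) = J(v + 1_I)`. -/
lemma plus_eq_shift (hJp : IsPlusFiltration ν Jp) (I : Finset ι) (v : ι → ℕ) :
    Jp I v = Jp ∅ (v + indVec I) := by
  ext g
  rw [mem_plus_iff hJp, mem_plus_iff hJp]
  constructor
  · rintro ⟨h1, h2⟩
    refine ⟨fun i => ?_, by simp⟩
    by_cases hi : i ∈ I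
    · have := Order.add_one_le_of_lt (h2 i hi)
      simpa [indVec, hi] using this
    · simpa [indVec, hi] using h1 i
  · rintro ⟨h1, -⟩
    refine ⟨fun i => le_trans (by simp) (h1 i), fun i hi => ?_⟩
    refine lt_of_lt_of_le ?_ (h1 i)
    have : v i < (v + indVec I) i := by simp [indVec, hi]
    exact_mod_cast this

lemma filtration_anti (hJp : IsPlusFiltration ν Jp) {v w : ι → ℕ} (h : v ≤ w) :
    Jp ∅ w ≤ Jp ∅ v := by
  intro g hg
  rw [mem_plus_iff hJp] at hg ⊢
  exact ⟨fun i => le_trans (by exact_mod_cast h i) (hg.1 i), by simp⟩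

/-- The Hilbert function exceeds every bound along each coordinate direction. -/
lemma hilbertFn_eventually (hJp : IsPlusFiltration ν Jp)
    (hfin : ∀ v : ι → ℕ, FiniteDimensional ℂ (V ⧸ Jp (∅ : Finset ι) v))
    (hrich : ∀ v : ι → ℕ, ∃ g : V, (∀ i, ν i g ≠ ⊤) ∧ ∀ i, (v i : ℕ∞) ≤ ν i g)
    (v : ι → ℕ) (i : ι) (k : ℕ) :
    ∃ N : ℕ, ∀ n, N ≤ n → k < hilbertFn Jp (v + n • indVec {i}) := by
  -- An element of `J(v + N e_i)` of finite `i`-th value `m` leaves the filtration beyond `m`.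
  have key : ∀ N : ℕ, ∃ N' : ℕ, ∀ n, N' ≤ n →
      hilbertFn Jp (v + N • indVec {i}) < hilbertFn Jp (v + n • indVec {i}) := by
    intro N
    obtain ⟨g, hg, hgv⟩ := hrich (v + N • indVec {i})
    obtain ⟨m, hm⟩ := ENat.ne_top_iff_exists.1 (hg i)
    refine ⟨N + m + 1, fun n hn => ?_⟩
    have := hfin (v + n • indVec {i})
    refine finrank_quotient_lt _ _ (filtration_anti hJp ?_) (g := g) ?_ ?_
    · intro j
      have : N * indVec {i} j ≤ n * indVec {i} j := Nat.mul_le_mul_right _ (by omega)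
      simpa using this
    · rw [mem_plus_iff hJp]; exact ⟨hgv, by simp⟩
    · rw [mem_plus_iff hJp]
      rintro ⟨h, -⟩
      have h := h i
      rw [← hm] at h
      have h : (v + n • indVec {i}) i ≤ m := by exact_mod_cast h
      simp [indVec] at h
      omega
  induction k with
  | zero =>
    obtain ⟨N', h⟩ := key 0
    exact ⟨N', fun n hn => lt_of_le_of_lt (Nat.zero_le _) (h n hn)⟩
  | succ k ih =>
    obtain ⟨N, hN⟩ := ih
    obtain ⟨N', h⟩ := key N
    exact ⟨N', fun n hn => lt_of_le_of_lt (hN N le_rfl) (h n hn)⟩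

/-- `h⁺(v) = d_I(v) + h(v + 1_I)`, from the chain `J⁺(v) ≤ J^{+I}(v) ≤ V`. -/
lemma hilbertFnPlus_eq (hJp : IsPlusFiltration ν Jp)
    (hfin : ∀ v : ι → ℕ, FiniteDimensional ℂ (V ⧸ Jp (∅ : Finset ι) v))
    (I : Finset ι) (v : ι → ℕ) :
    hilbertFnPlus Jp v = dimPlus Jp I v + hilbertFn Jp (v + indVec I) := by
  have : FiniteDimensional ℂ (V ⧸ Jp Finset.univ v) := by
    rw [plus_eq_shift hJp]; exact hfin _
  have h := finrank_quotient_tower (Jp Finset.univ v) (Jp I v) (by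
    intro g hg
    rw [mem_plus_iff hJp] at hg ⊢
    exact ⟨hg.1, fun i _ => hg.2 i (Finset.mem_univ i)⟩)
  rw [hilbertFnPlus, h, dimPlus, hilbertFn, ← plus_eq_shift hJp]

/-- `(q - 1) q^{a-1} (1 + q⁻¹ + ⋯ + q^{-(d-1)}) = q^a - q^{a-d}`. -/
lemma geom_laurent (a : ℤ) (d : ℕ) :
    (T 1 - 1 : LaurentPolynomial ℤ) * (T (a - 1) *
      Polynomial.eval₂ LaurentPolynomial.C (T (-1)) (∑ k ∈ Finset.range d, (X : ℤ[X]) ^ k))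
      = T a - T (a - d) := by
  induction d with
  | zero => simp
  | succ d ih =>
    rw [Finset.sum_range_succ, Polynomial.eval₂_add, mul_add, mul_add, ih, Polynomial.eval₂_X_pow,
      T_pow, ← T_add, sub_mul, ← T_add, one_mul]
    have e1 : (1 : ℤ) + (a - 1 + d * (-1)) = a - d := by ring
    have e2 : a - 1 + (d : ℤ) * (-1) = a - ((d + 1 : ℕ) : ℤ) := by push_cast; ring
    rw [e1, e2]
    ring

/-- The generalized Poincaré coefficient is, up to the factor `1 - q`, the mixed difference of
`q^{h(v)}`. Nonemptiness of `ι` is needed for the terms `q^{h⁺(v)}` to cancel. -/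
lemma sub_one_mul_genPoincareCoeff [Nonempty ι] (hJp : IsPlusFiltration ν Jp)
    (hfin : ∀ v : ι → ℕ, FiniteDimensional ℂ (V ⧸ Jp (∅ : Finset ι) v)) (v : ι → ℕ) :
    (T 1 - 1 : LaurentPolynomial ℤ) * genPoincareCoeff Jp v =
      - ∑ I : Finset ι, (-1) ^ I.card * T (hilbertFn Jp (v + indVec I) : ℤ) := by
  have hsum : ∑ I : Finset ι, (-1 : LaurentPolynomial ℤ) ^ I.card = 0 := by
    have h := Finset.sum_powerset_neg_one_pow_card_of_nonempty
      (Finset.univ_nonempty (α := ι))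
    rw [Finset.powerset_univ] at h
    have h' := congrArg (Int.cast : ℤ → LaurentPolynomial ℤ) h
    push_cast at h'
    exact h'
  have hterm : ∀ I : Finset ι, (T 1 - 1 : LaurentPolynomial ℤ) *
      (T ((hilbertFnPlus Jp v : ℤ) - 1) * Polynomial.eval₂ LaurentPolynomial.C (T (-1))
        ((-1 : ℤ[X]) ^ I.card * ∑ k ∈ Finset.range (dimPlus Jp I v), X ^ k)) =
      (-1) ^ I.card * T (hilbertFnPlus Jp v : ℤ)
        - (-1) ^ I.card * T (hilbertFn Jp (v + indVec I) : ℤ) := by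
    intro I
    have e : (hilbertFn Jp (v + indVec I) : ℤ) = hilbertFnPlus Jp v - dimPlus Jp I v := by
      rw [hilbertFnPlus_eq hJp hfin I v]; push_cast; ring
    rw [e, ← mul_sub, ← geom_laurent, Polynomial.eval₂_mul, Polynomial.eval₂_pow,
      Polynomial.eval₂_neg, Polynomial.eval₂_one]
    ring
  rw [genPoincareCoeff, fibreClassPoly, Polynomial.eval₂_finsetSum, Finset.mul_sum,
    Finset.mul_sum, Finset.sum_congr rfl fun I _ => hterm I, Finset.sum_sub_distrib,
    ← Finset.sum_mul, hsum]
  simp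

/-- The coefficient of `q^k` in `(1 - q) c_v(q)`, in terms of the Hilbert function. -/
lemma coeff_sub_one_mul [Nonempty ι] (hJp : IsPlusFiltration ν Jp)
    (hfin : ∀ v : ι → ℕ, FiniteDimensional ℂ (V ⧸ Jp (∅ : Finset ι) v)) (v : ι → ℕ) (k : ℕ) :
    ((1 - T 1 : LaurentPolynomial ℤ) * genPoincareCoeff Jp v).coeff (k : ℤ) =
      ∑ I : Finset ι, (-1) ^ I.card * if hilbertFn Jp (v + indVec I) = k then (1 : ℤ) else 0 := by
  have h := sub_one_mul_genPoincareCoeff hJp hfin v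
  rw [← neg_sub (T 1), neg_mul, h, neg_neg]
  have hc : ∀ (n : ℕ) (p : LaurentPolynomial ℤ),
      ((-1) ^ n * p).coeff (k : ℤ) = (-1) ^ n * p.coeff (k : ℤ) := by
    intro n p
    induction n with
    | zero => simp
    | succ n ih => rw [pow_succ', pow_succ', neg_one_mul, neg_one_mul, neg_mul, neg_mul, ← ih]; simp
  simp [AddMonoidAlgebra.coeff_sum, hc]

end Filtration

/-- Proposition 1: Two collections of `r` order functions with finite
codimensions, such that every multi-index is dominated by the value vector of some
element with all values finite, have equal Hilbert functions as soon as all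
coefficients of their generalized Poincaré series agree. -/
theorem genPoincare_determines_hilbert
    {V' : Type*} [AddCommGroup V'] [Module ℂ V']
    (ν : ι → V → ℕ∞) (ν' : ι → V' → ℕ∞)
    (hsmul : ∀ i, ∀ (c : ℂ) (g : V), c ≠ 0 → ν i (c • g) = ν i g)
    (hzero : ∀ i, ν i 0 = ⊤)
    (hadd : ∀ i, ∀ g₁ g₂ : V, min (ν i g₁) (ν i g₂) ≤ ν i (g₁ + g₂))
    (hsmul' : ∀ i, ∀ (c : ℂ) (g : V'), c ≠ 0 → ν' i (c • g) = ν' i g)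
    (hzero' : ∀ i, ν' i 0 = ⊤)
    (hadd' : ∀ i, ∀ g₁ g₂ : V', min (ν' i g₁) (ν' i g₂) ≤ ν' i (g₁ + g₂))
    (Jp : Finset ι → (ι → ℕ) → Submodule ℂ V)
    (Jp' : Finset ι → (ι → ℕ) → Submodule ℂ V')
    (hJp : IsPlusFiltration ν Jp)
    (hJp' : IsPlusFiltration ν' Jp')
    (hfin : ∀ v : ι → ℕ, FiniteDimensional ℂ (V ⧸ Jp (∅ : Finset ι) v))
    (hfin' : ∀ v : ι → ℕ, FiniteDimensional ℂ (V' ⧸ Jp' (∅ : Finset ι) v))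
    (hrich : ∀ v : ι → ℕ, ∃ g : V,
      (∀ i, ν i g ≠ ⊤) ∧ ∀ i, (v i : ℕ∞) ≤ ν i g)
    (hrich' : ∀ v : ι → ℕ, ∃ g : V',
      (∀ i, ν' i g ≠ ⊤) ∧ ∀ i, (v i : ℕ∞) ≤ ν' i g)
    (hcoeff : ∀ v : ι → ℕ, genPoincareCoeff Jp v = genPoincareCoeff Jp' v) :
    ∀ v : ι → ℕ, hilbertFn Jp v = hilbertFn Jp' v := by
  intro v
  rcases isEmpty_or_nonempty ι with hι | hι
  · -- With no order functions every `J(v)` is the whole space.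
    have h1 : Jp ∅ v = ⊤ := by
      ext g; rw [mem_plus_iff hJp]; simp
    have h2 : Jp' ∅ v = ⊤ := by
      ext g; rw [mem_plus_iff hJp']; simp
    rw [hilbertFn, hilbertFn, h1, h2, Module.finrank_zero_of_subsingleton,
      Module.finrank_zero_of_subsingleton]
  · -- The coefficient of `q^k`, `k = h(v)`, in `q^{h(w)} - q^{h'(w)}`.
    set k := hilbertFn Jp v with hk
    have main := eq_zero_of_mixedDiff_eq_zero (Finset.univ : Finset ι)
      (fun w => (if hilbertFn Jp w = k then (1 : ℤ) else 0)
        - if hilbertFn Jp' w = k then (1 : ℤ) else 0) ?_ ?_ v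
    · by_contra hne
      simp [← hk, Ne.symm hne] at main
    · intro w i
      obtain ⟨N, hN⟩ := hilbertFn_eventually hJp hfin hrich w i k
      obtain ⟨N', hN'⟩ := hilbertFn_eventually hJp' hfin' hrich' w i k
      refine ⟨max N N', fun n hn => ?_⟩
      have a := (hN n (le_trans (le_max_left _ _) hn)).ne'
      have b := (hN' n (le_trans (le_max_right _ _) hn)).ne'
      simp only [if_neg a, if_neg b, sub_zero]
    · intro w
      have a := coeff_sub_one_mul hJp hfin w k
      have b := coeff_sub_one_mul hJp' hfin' w k
      rw [hcoeff w, b] at a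
      simp only [mul_sub, Finset.sum_sub_distrib, Finset.powerset_univ]
      rw [a, sub_self]
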